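/- arXiv:2511.23152 — 3 statements merged into one kernel-verified Lean document; each statement's English description precedes it below -/
import Mathlib

section
/- Let (Q,∘) be a finite loop with identity e admitting a unitary collinear factorization Θ = (A,B,C). Then there exist unitary matrices U, V, W ∈ Matrix n n ℂ such that the gauge-transformed slices A'_g = U·A_g·Vᴴ, B'_g = V·B_g·Wᴴ, C'_g = W·C_g·Uᴴ satisfy the synchronized condition A'_g = B'_g = (C'_g)ᴴ for every g ∈ Q. In particular one may take (U, V, W) = (A_eᴴ, I_n, B_e). -/
open Matrix BigOperators

/-- Model tensor: T_{abc}(Θ) = (1/n)·Tr(A_a·B_b·C_c). -/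
noncomputable def Tmod {Q : Type*} [Fintype Q] (A B C : Q → Matrix Q Q ℂ) (a b c : Q) : ℂ :=
  (1 / (Fintype.card Q : ℂ)) * Matrix.trace (A a * B b * C c)

/-- synchronization lemma for loops admitting a unitary collinear
factorization.  One may take the unitary gauge (U, V, W) = (A_eᴴ, I, B_e), under
which A'_g = B'_g = (C'_g)ᴴ for every g. -/
theorem stmt5 {Q : Type*} [Fintype Q] [DecidableEq Q] [Nonempty Q]
    (op : Q → Q → Q)
    (hL : ∀ a : Q, Function.Bijective fun x => op a x)
    (hR : ∀ b : Q, Function.Bijective fun x => op x b)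
    (e : Q) (he : ∀ x, op e x = x ∧ op x e = x)
    (A B C : Q → Matrix Q Q ℂ)
    (hAu : ∀ a, A a ∈ Matrix.unitaryGroup Q ℂ)
    (hBu : ∀ b, B b ∈ Matrix.unitaryGroup Q ℂ)
    (hCu : ∀ c, C c ∈ Matrix.unitaryGroup Q ℂ)
    (hT : ∀ a b c, Tmod A B C a b c = if op a b = c then 1 else 0)
    (hCol : ∀ a b c, op a b = c → A a * B b = (C c)ᴴ) :
    ∃ U V W : Matrix Q Q ℂ,
      U ∈ Matrix.unitaryGroup Q ℂ ∧ V ∈ Matrix.unitaryGroup Q ℂ ∧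
      W ∈ Matrix.unitaryGroup Q ℂ ∧
      (∀ g, U * A g * Vᴴ = V * B g * Wᴴ ∧ U * A g * Vᴴ = (W * C g * Uᴴ)ᴴ) ∧
      U = (A e)ᴴ ∧ V = 1 ∧ W = B e := by
  have hAe : (A e)ᴴ * A e = 1 := Matrix.mem_unitaryGroup_iff'.mp (hAu e)
  have hBe : B e * (B e)ᴴ = 1 := Matrix.mem_unitaryGroup_iff.mp (hBu e)
  refine ⟨(A e)ᴴ, 1, B e, Unitary.star_mem (hAu e), one_mem _, hBu e, fun g => ?_, rfl, rfl, rfl⟩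
  have hleft : A e * B g = (C g)ᴴ := hCol e g g (he g).1
  have hright : A g * B e = (C g)ᴴ := hCol g e g (he g).2
  have hA : (A e)ᴴ * A g = (A e)ᴴ * (C g)ᴴ * (B e)ᴴ := by
    rw [← hright, Matrix.mul_assoc, Matrix.mul_assoc, hBe, Matrix.mul_one]
  have hB : B g * (B e)ᴴ = (A e)ᴴ * (C g)ᴴ * (B e)ᴴ := by
    rw [← hleft, ← Matrix.mul_assoc, hAe, Matrix.one_mul]
  constructor
  · rw [conjTranspose_one, Matrix.mul_one, Matrix.one_mul, hA, hB]
  · rw [conjTranspose_one, Matrix.mul_one, hA, conjTranspose_mul, conjTranspose_mul,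
      conjTranspose_conjTranspose, Matrix.mul_assoc]
end

section
/- Let (Q,∘) be a finite loop with identity e and let ρ : Q → Matrix n n ℂ be a map with unitary values such that the synchronized factorization Θ with slices A_g = B_g = ρ(g) and C_g = ρ(g)ᴴ is a unitary collinear factorization for (Q,∘). Then the character of ρ coincides with that of the left-regular representation: Tr(ρ(g)) = n if g = e and Tr(ρ(g)) = 0 otherwise. Moreover, ρ is injective. -/
open Matrix BigOperators

/-- for a synchronized unitary collinear factorization of a loop,
the character of ρ coincides with that of the regular representation
(Tr ρ(g) = n if g = e, else 0), and ρ is injective. -/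
theorem stmt7 {Q : Type*} [Fintype Q] [DecidableEq Q] [Nonempty Q]
    (op : Q → Q → Q)
    (hL : ∀ a : Q, Function.Bijective fun x => op a x)
    (hR : ∀ b : Q, Function.Bijective fun x => op x b)
    (e : Q) (he : ∀ x, op e x = x ∧ op x e = x)
    (ρ : Q → Matrix Q Q ℂ)
    (hρu : ∀ g, ρ g ∈ Matrix.unitaryGroup Q ℂ)
    (hT : ∀ a b c, Tmod (fun g => ρ g) (fun g => ρ g) (fun g => (ρ g)ᴴ) a b c =
      if op a b = c then 1 else 0)
    (hCol : ∀ a b c, op a b = c → ρ a * ρ b = ((ρ c)ᴴ)ᴴ) :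
    (∀ g, Matrix.trace (ρ g) = if g = e then (Fintype.card Q : ℂ) else 0) ∧
      Function.Injective ρ := by
  have hn : (Fintype.card Q : ℂ) ≠ 0 := Nat.cast_ne_zero.mpr Fintype.card_ne_zero
  have hone : ρ e = 1 := by
    have hidem : ρ e * ρ e = ρ e := by simpa using hCol e e e (he e).1
    have hinv : star (ρ e) * ρ e = 1 := Matrix.mem_unitaryGroup_iff'.mp (hρu e)
    calc ρ e = star (ρ e) * ρ e * ρ e := by rw [hinv, one_mul]
      _ = 1 := by rw [mul_assoc, hidem, hinv]
  constructor
  · intro g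
    have h := hT g e e
    simp only [Tmod, hone, (he g).2, conjTranspose_one, mul_one] at h
    rw [one_div, inv_mul_eq_iff_eq_mul₀ hn] at h
    simpa using h
  · intro g k hgk
    have hgg := hT e g g
    have hgk' := hT e g k
    simp only [Tmod, ← hgk] at hgg hgk'
    rw [hgg] at hgk'
    simpa [(he g).1] using hgk'
end

section
/- Let (Q,∘) be a finite quasigroup admitting a unitary collinear factorization. Then (Q,∘) is isotopic to a group: there exists a group structure ⋆ on Q and bijections φ, ψ, χ : Q → Q such that χ(a∘b) = φ(a) ⋆ ψ(b) for all a, b ∈ Q. -/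
open Matrix BigOperators

/-- `op` is isotopic to a group structure on `Q`: there is a group operation `m`
on `Q` and bijections φ, ψ, χ with χ(a∘b) = φ(a) ⋆ ψ(b). -/
def IsotopicToGroup {Q : Type*} (op : Q → Q → Q) : Prop :=
  ∃ m : Q → Q → Q,
    (∀ x y z : Q, m (m x y) z = m x (m y z)) ∧
    (∃ e : Q, (∀ x, m e x = x ∧ m x e = x) ∧ ∀ x, ∃ y, m x y = e ∧ m y x = e) ∧
    ∃ φ ψ χ : Q → Q, Function.Bijective φ ∧ Function.Bijective ψ ∧
      Function.Bijective χ ∧ ∀ a b, χ (op a b) = m (φ a) (ψ b)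

/-- A quasigroup whose multiplication is realised inside a group through three maps, the last of
which is injective, is isotopic to a group. -/
theorem isotopicToGroup_of_mul_eq {Q G : Type*} [Nonempty Q] [Group G] (op : Q → Q → Q)
    (hL : ∀ a : Q, Function.Bijective fun x => op a x)
    (hR : ∀ b : Q, Function.Bijective fun x => op x b)
    (f g h : Q → G) (hinj : Function.Injective h) (hmul : ∀ a b, f a * g b = h (op a b)) :
    IsotopicToGroup op := by
  obtain ⟨e⟩ := ‹Nonempty Q›
  let L : Q ≃ Q := Equiv.ofBijective _ (hL e)
  let R : Q ≃ Q := Equiv.ofBijective _ (hR e)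
  have hLs : ∀ y, op e (L.symm y) = y := L.apply_symm_apply
  have hRs : ∀ x, op (R.symm x) e = x := R.apply_symm_apply
  -- the principal isotope with unit `op e e`, on which `x ↦ h x * (h (op e e))⁻¹` is multiplicative
  have key : ∀ x y, h (op (R.symm x) (L.symm y)) = h x * (h (op e e))⁻¹ * h y := by
    intro x y
    have h₁ := hmul (R.symm x) e
    have h₂ := hmul e (L.symm y)
    rw [hRs] at h₁
    rw [hLs] at h₂
    rw [← h₁, ← h₂, ← hmul, ← hmul]
    group
  refine ⟨fun x y => op (R.symm x) (L.symm y), fun x y z => hinj ?_, ⟨op e e, fun x => ⟨hinj ?_,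
    hinj ?_⟩, fun x => ?_⟩, R, L, id, R.bijective, L.bijective, Function.bijective_id, ?_⟩
  · simp only [key, mul_assoc]
  · simp [key]
  · simp [key]
  · obtain ⟨b, hb⟩ := (hL (R.symm x)).surjective (op e e)
    have hxb : op (R.symm x) (L.symm (L b)) = op e e := by simpa using hb
    refine ⟨L b, hxb, hinj ?_⟩
    have hk := key x (L b)
    rw [hxb] at hk
    have hLb : h (L b) = h (op e e) * (h x)⁻¹ * (h x * (h (op e e))⁻¹ * h (L b)) := by
      group
    rw [← hk] at hLb
    rw [key, hLb]
    group
  · simp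

/-- a finite quasigroup admitting a unitary collinear factorization
is isotopic to a group. -/
theorem stmt9 {Q : Type*} [Fintype Q] [DecidableEq Q] [Nonempty Q]
    (op : Q → Q → Q)
    (hL : ∀ a : Q, Function.Bijective fun x => op a x)
    (hR : ∀ b : Q, Function.Bijective fun x => op x b)
    (hUCF : ∃ A B C : Q → Matrix Q Q ℂ,
      (∀ a, A a ∈ Matrix.unitaryGroup Q ℂ) ∧
      (∀ b, B b ∈ Matrix.unitaryGroup Q ℂ) ∧
      (∀ c, C c ∈ Matrix.unitaryGroup Q ℂ) ∧
      (∀ a b c, Tmod A B C a b c = if op a b = c then 1 else 0) ∧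
      (∀ a b c, op a b = c → A a * B b = (C c)ᴴ)) :
    IsotopicToGroup op := by
  obtain ⟨A, B, C, hA, hB, hC, hT, hcol⟩ := hUCF
  have hCinj : Function.Injective C := by
    intro c c' hcc
    obtain ⟨b, hb : op c b = c⟩ := (hL c).surjective c
    have h₁ := hT c b c
    have h₂ := hT c b c'
    rw [Tmod, hcc, ← Tmod, h₂, hb] at h₁
    by_contra hne
    simp [hne] at h₁
  refine isotopicToGroup_of_mul_eq (G := Matrix.unitaryGroup Q ℂ) op hL hR (fun a => ⟨A a, hA a⟩)
    (fun b => ⟨B b, hB b⟩) (fun c => (⟨C c, hC c⟩ : Matrix.unitaryGroup Q ℂ)⁻¹) ?_ ?_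
  · intro c c' hcc
    exact hCinj (congrArg Subtype.val (inv_injective hcc))
  · intro a b
    exact Subtype.ext (hcol a b _ rfl)
end
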